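/- There exists an instance with two attributes (one with 4 values, one binary), 4 candidates, committee size k = 2, and a target distribution such that the L1-optimal committees and the (1,max)-optimal committees are disjoint. Concretely: candidates A=(x_1^1, x_2^2), B=(x_1^2, x_2^2), C=(x_1^3, x_2^1), D=(x_1^4, x_2^1); target π_1 = (0.5, 0.5, 0, 0) and π_2 = (0.9, 0.1); the L1-optimal committees are all pairs except {C,D} (each with loss 1.8 vs 2.6... specifically {C,D} has higher L1 loss), while the unique (1,max)-optimal committee is {C,D} with loss 0.6. -/

import Mathlib

open Finset

/-- Candidate `c`'s value on attribute 1 (which has 4 values): A↦0, B↦1, C↦2, D↦3. -/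
def attr1 : Fin 4 → Fin 4 := id

/-- Candidate `c`'s value on the binary attribute 2: A,B ↦ 1 (x_2^2), C,D ↦ 0 (x_2^1). -/
def attr2 : Fin 4 → Fin 2 := fun c => if c.val < 2 then 1 else 0

noncomputable def π1 : Fin 4 → ℝ := ![1/2, 1/2, 0, 0]

noncomputable def π2 : Fin 2 → ℝ := ![9/10, 1/10]

noncomputable def rep1 (S : Finset (Fin 4)) (j : Fin 4) : ℝ :=
  ((S.filter (fun c => attr1 c = j)).card : ℝ) / 2

noncomputable def rep2 (S : Finset (Fin 4)) (j : Fin 2) : ℝ :=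
  ((S.filter (fun c => attr2 c = j)).card : ℝ) / 2

noncomputable def loss1' (S : Finset (Fin 4)) : ℝ :=
  (∑ j, |rep1 S j - π1 j|) + ∑ j, |rep2 S j - π2 j|

noncomputable def loss1max (S : Finset (Fin 4)) : ℝ :=
  (⨆ j, |rep1 S j - π1 j|) + ⨆ j, |rep2 S j - π2 j|

/- A committee `S` enters the losses only through the number `n = #(S \ {0, 1})` of its members
from `{C, D}`. The candidates all differ on attribute 1, and `π1` is exactly the representation
achieved by `{A, B}`; so attribute 1 costs `n` in the L1 loss, but in the `(1,max)` loss it costs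
`1/2` for every `n ≠ 0`. Attribute 2 is binary, so its two deviations both equal `|n/2 - 9/10|`.
Hence the L1 loss is `n + |n - 9/5|`, which is constant until it increases at `n = 2`, whereas the
`(1,max)` loss, for `n ≠ 0`, is `1/2 + |n/2 - 9/10|`, which favours `n = 2`; the committee `{A, B}`
saves the `1/2` but misses `π2` by `9/10`. -/

theorem forall_le_iff_of_eq_ite {α β : Type*} [Preorder β] {p q : α → Prop} [DecidablePred q]
    {f : α → β} {a b : β} (hab : a < b) (hf : ∀ x, p x → f x = if q x then a else b)
    (hpq : ∃ x, p x ∧ q x) {x : α} (hx : p x) : (∀ y, p y → f x ≤ f y) ↔ q x := by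
  constructor
  · intro hmin
    obtain ⟨y, hpy, hqy⟩ := hpq
    by_contra hqx
    have hba : b ≤ a := by simpa only [hf x hx, hf y hpy, if_neg hqx, if_pos hqy] using hmin y hpy
    exact hab.not_ge hba
  · intro hqx y hy
    rw [hf x hx, hf y hy, if_pos hqx]
    split_ifs
    exacts [le_rfl, hab.le]

section Indicator

variable {α M : Type*} [AddCommGroup M]

theorem sum_abs_indicator_sub_indicator [Lattice M] [AddLeftMono M] [Fintype α]
    [DecidableEq α] (S T : Finset α) (a : M) :
    ∑ j, |(S : Set α).indicator (fun _ => a) j - (T : Set α).indicator (fun _ => a) j| =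
      #(symmDiff S T) • |a| := by
  have habs (j : α) :
      |(S : Set α).indicator (fun _ => a) j - (T : Set α).indicator (fun _ => a) j| =
        if j ∈ symmDiff S T then |a| else 0 := by
    rw [← Set.abs_indicator_symmDiff, ← coe_symmDiff]
    simp only [Set.indicator_apply, mem_coe, apply_ite abs, abs_zero]
  simp only [habs, sum_ite_mem, univ_inter, sum_const]

theorem iSup_abs_indicator_sub_indicator_of_ne [ConditionallyCompleteLattice M]
    [AddLeftMono M] {S T : Set α} (hST : S ≠ T) (a : M) :
    ⨆ j, |S.indicator (fun _ => a) j - T.indicator (fun _ => a) j| = |a| := by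
  obtain ⟨i, hi⟩ : (symmDiff S T).Nonempty := Set.symmDiff_nonempty.2 hST
  have hle (j : α) : |(symmDiff S T).indicator (fun _ => a) j| ≤ |a| := by
    by_cases hj : j ∈ symmDiff S T
    · rw [Set.indicator_of_mem hj]
    · rw [Set.indicator_of_notMem hj, abs_zero]
      exact abs_nonneg a
  have hattained : |(symmDiff S T).indicator (fun _ => a) i| = |a| := by
    rw [Set.indicator_of_mem hi]
  have : Nonempty α := ⟨i⟩
  simp only [← Set.abs_indicator_symmDiff]
  exact ciSup_eq_of_forall_le_of_forall_lt_exists_gt hle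
    fun w hw => ⟨i, hw.trans_eq hattained.symm⟩

end Indicator

section Card

variable {α : Type*} [DecidableEq α] {S T : Finset α}

theorem card_symmDiff_of_card_eq (h : #S = #T) : #(symmDiff S T) = 2 * #(S \ T) := by
  rw [symmDiff_def, sup_eq_union, card_union_of_disjoint disjoint_sdiff_sdiff,
    ← card_sdiff_comm h, two_mul]

theorem card_sdiff_eq_zero_iff_of_card_le (h : #T ≤ #S) : #(S \ T) = 0 ↔ S = T := by
  rw [card_eq_zero, sdiff_eq_empty_iff_subset, subset_iff_eq_of_card_le h]

end Card

section Binary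

variable {M : Type*} [AddCommGroup M] {r p : Fin 2 → M}

theorem abs_sub_eq_abs_sub_zero_of_sum_eq [Lattice M] (h : ∑ j, r j = ∑ j, p j) (j : Fin 2) :
    |r j - p j| = |r 0 - p 0| := by
  revert j
  rw [Fin.forall_fin_two]
  refine ⟨rfl, ?_⟩
  rw [abs_sub_comm (r 0)]
  congr 1
  rw [sub_eq_sub_iff_add_eq_add, add_comm, ← Fin.sum_univ_two, h, Fin.sum_univ_two]

theorem sum_abs_sub_of_sum_eq [Lattice M] (h : ∑ j, r j = ∑ j, p j) :
    ∑ j, |r j - p j| = 2 • |r 0 - p 0| := by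
  simp only [abs_sub_eq_abs_sub_zero_of_sum_eq h, Fin.sum_univ_two, two_nsmul]

theorem iSup_abs_sub_of_sum_eq [ConditionallyCompleteLattice M] (h : ∑ j, r j = ∑ j, p j) :
    ⨆ j, |r j - p j| = |r 0 - p 0| := by
  simp only [abs_sub_eq_abs_sub_zero_of_sum_eq h, ciSup_const]

end Binary

section Representation

theorem rep1_eq_indicator (S : Finset (Fin 4)) :
    rep1 S = (S : Set (Fin 4)).indicator fun _ => 1 / 2 := by
  ext j
  have hfilter : {c ∈ S | attr1 c = j} = if j ∈ S then {j} else ∅ := filter_eq' S j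
  rw [rep1, hfilter, Set.indicator_apply]
  simp only [mem_coe]
  split_ifs <;> simp

theorem π1_eq_indicator :
    π1 = (({0, 1} : Finset (Fin 4)) : Set (Fin 4)).indicator fun _ => 1 / 2 := by
  ext j
  fin_cases j <;> simp [π1]

theorem attr2_eq_zero_iff (c : Fin 4) : attr2 c = 0 ↔ c ∉ ({0, 1} : Finset (Fin 4)) := by
  revert c
  decide

theorem rep2_zero_sub_π2_zero (S : Finset (Fin 4)) :
    rep2 S 0 - π2 0 = #(S \ {0, 1}) / 2 - 9 / 10 := by
  simp only [rep2, attr2_eq_zero_iff, filter_notMem_eq_sdiff]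
  rfl

theorem sum_rep2 (S : Finset (Fin 4)) : ∑ j, rep2 S j = #S / 2 := by
  simp only [rep2]
  rw [← sum_div, ← Nat.cast_sum, ← card_eq_sum_card_fiberwise fun c _ => mem_coe.2 (mem_univ _)]

theorem sum_rep2_eq_sum_π2 {S : Finset (Fin 4)} (hS : #S = 2) :
    ∑ j, rep2 S j = ∑ j, π2 j := by
  rw [sum_rep2, hS, Fin.sum_univ_two]
  norm_num [π2]

end Representation

section Loss

variable {S : Finset (Fin 4)}

theorem sum_abs_rep1_sub_π1 (hS : #S = 2) : ∑ j, |rep1 S j - π1 j| = #(S \ {0, 1}) := by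
  have hcard : #S = #({0, 1} : Finset (Fin 4)) := hS
  rw [rep1_eq_indicator, π1_eq_indicator, sum_abs_indicator_sub_indicator,
    card_symmDiff_of_card_eq hcard, abs_of_pos one_half_pos, nsmul_eq_mul]
  push_cast
  ring

theorem iSup_abs_rep1_sub_π1 (hS : #S = 2) :
    ⨆ j, |rep1 S j - π1 j| = if #(S \ {0, 1}) = 0 then 0 else 1 / 2 := by
  have hcard : #S = #({0, 1} : Finset (Fin 4)) := hS
  simp only [rep1_eq_indicator, π1_eq_indicator, card_sdiff_eq_zero_iff_of_card_le hcard.ge]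
  split_ifs with h
  · simp only [h, sub_self, abs_zero, ciSup_const]
  · rw [iSup_abs_indicator_sub_indicator_of_ne (coe_injective.ne h), abs_of_pos one_half_pos]

theorem loss1'_eq_card_sdiff (hS : #S = 2) :
    loss1' S = #(S \ {0, 1}) + |(#(S \ {0, 1}) : ℝ) - 9 / 5| := by
  rw [loss1', sum_abs_rep1_sub_π1 hS, sum_abs_sub_of_sum_eq (sum_rep2_eq_sum_π2 hS),
    rep2_zero_sub_π2_zero, ← abs_nsmul]
  congr 2
  ring

theorem loss1max_eq_card_sdiff (hS : #S = 2) :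
    loss1max S =
      (if #(S \ {0, 1}) = 0 then 0 else 1 / 2) + |(#(S \ {0, 1}) : ℝ) / 2 - 9 / 10| := by
  rw [loss1max, iSup_abs_rep1_sub_π1 hS, iSup_abs_sub_of_sum_eq (sum_rep2_eq_sum_π2 hS),
    rep2_zero_sub_π2_zero]

theorem eq_two_three_iff_card_sdiff (hS : #S = 2) : S = {2, 3} ↔ #(S \ {0, 1}) = 2 := by
  revert S
  decide

theorem loss1'_eq_ite (hS : #S = 2) : loss1' S = if S ≠ {2, 3} then 9 / 5 else 11 / 5 := by
  have hle : #(S \ {0, 1}) ≤ 2 := hS ▸ card_le_card sdiff_subset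
  simp only [loss1'_eq_card_sdiff hS, ne_eq, eq_two_three_iff_card_sdiff hS]
  interval_cases #(S \ {0, 1}) <;> norm_num [abs_of_pos, abs_of_neg]

theorem loss1max_eq_ite (hS : #S = 2) :
    loss1max S = if S = {2, 3} then 3 / 5 else 9 / 10 := by
  have hle : #(S \ {0, 1}) ≤ 2 := hS ▸ card_le_card sdiff_subset
  simp only [loss1max_eq_card_sdiff hS, eq_two_three_iff_card_sdiff hS]
  interval_cases #(S \ {0, 1}) <;> norm_num [abs_of_pos, abs_of_neg]

end Loss

theorem stmt13 :
    (∀ S : Finset (Fin 4), S.card = 2 →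
      ((∀ T : Finset (Fin 4), T.card = 2 → loss1' S ≤ loss1' T) ↔ S ≠ {2, 3})) ∧
    (∀ S : Finset (Fin 4), S.card = 2 →
      ((∀ T : Finset (Fin 4), T.card = 2 → loss1max S ≤ loss1max T) ↔ S = {2, 3})) := by
  constructor
  · intro S hS
    exact forall_le_iff_of_eq_ite (by norm_num) (fun _ => loss1'_eq_ite)
      ⟨{0, 1}, by rfl, by decide⟩ hS
  · intro S hS
    exact forall_le_iff_of_eq_ite (by norm_num) (fun _ => loss1max_eq_ite)
      ⟨{2, 3}, by rfl, by rfl⟩ hS
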